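/- Let f : ℝ → ℝ be smooth (C^∞), and define the operator Ω_f on smooth functions by Ω_f(h) = h' − f·h. Then for every n ≥ 0 and every x ∈ ℝ, the n-th complete Bell polynomial evaluated at the negated derivatives of f equals the n-fold iterate of Ω_f applied to the constant function 1: B_n(−f(x), −f'(x), −f''(x), …, −f^{(n−1)}(x)) = (Ω_f^{[n]} 𝟏)(x), where 𝟏 denotes the constant function with value 1 (for n = 0 both sides equal 1). -/

import Mathlib

/-!
Both sides satisfy the recurrence `a (n + 1) = ∑ i ≤ n, C(n, i) * x (i + 1) * a (n - i)`, `a 0 = 1`,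
with `x (i + 1) = -f⁽ⁱ⁾(x)`, so they agree by strong induction.

*Bell side.* Fix a number `N ≥ n` of variables. Then `B_n = n! * c_n` where `c_n` is the sum of
`w(j) = ∏ (x (m + 1) / (m + 1)!) ^ j m / (j m)!` over all multiplicity vectors `j : Fin N → ℕ` with
`∑ (m + 1) * j m = n` (`bellComplete_eq`): a vector with `∑ j m = k` has `∑ m * j m = n - k`, hence
is supported on `m ≤ n - k`, which matches the index set of `B_{n,k}`. Multiplying `w(j)` by
`n + 1 = ∑ (m + 1) * j m` and removing one part of size `m + 1` from `j` gives
`(n + 1) * c_{n+1} = ∑ m, (m + 1) * (x (m + 1) / (m + 1)!) * c_{n-m}` (`bellCoeff_succ`).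

*Operator side.* If `F' = f`, then `Ω_f` is conjugate to differentiation:
`Ω_f^[n] 1 = e^F * (e^{-F})⁽ⁿ⁾`. Since `(e^{-F})' = -f * e^{-F}`, the Leibniz rule yields the same
recurrence (`Omega_iterate_succ`).
-/


/-- The partial Bell polynomial `B_{n,k}(x_1, …, x_{n-k+1})`, a sum over all
sequences `(j_1, …, j_{n-k+1})` of nonnegative integers with
`j_1 + ⋯ + j_{n-k+1} = k` and `j_1 + 2 j_2 + ⋯ + (n-k+1) j_{n-k+1} = n`.
The argument `x m` is `x_m` (indices `1, …, n-k+1` are used). -/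
noncomputable def bellPartial (n k : ℕ) (x : ℕ → ℝ) : ℝ :=
  ∑ j ∈ Finset.univ.filter
      (fun j : Fin (n - k + 1) → Fin (n + 1) =>
        (∑ m : Fin (n - k + 1), (j m : ℕ)) = k ∧
        (∑ m : Fin (n - k + 1), ((m : ℕ) + 1) * (j m : ℕ)) = n),
    ((n.factorial : ℝ) / ∏ m : Fin (n - k + 1), ((j m : ℕ).factorial : ℝ)) *
      ∏ m : Fin (n - k + 1), (x ((m : ℕ) + 1) / (((m : ℕ) + 1).factorial : ℝ)) ^ ((j m : ℕ))

/-- The complete Bell polynomial `B_n(x_1, …, x_n) = ∑_{k=1}^n B_{n,k}`, with `B_0 = 1`. -/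
noncomputable def bellComplete (n : ℕ) (x : ℕ → ℝ) : ℝ :=
  if n = 0 then 1 else ∑ k ∈ Finset.Icc 1 n, bellPartial n k x

/-- The operator `Ω_f(h) = h' - f·h` on functions `ℝ → ℝ`. -/
noncomputable def Omega (f : ℝ → ℝ) (h : ℝ → ℝ) : ℝ → ℝ :=
  fun x => deriv h x - f x * h x

/-- Multiplicity vectors of the partitions of `n` into parts of size at most `N`;
`j m` is the number of parts equal to `m + 1`. -/
def partVec (N n : ℕ) : Finset (Fin N → ℕ) :=
  (Fintype.piFinset fun _ : Fin N => Finset.range (n + 1)).filter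
    (fun j => ∑ m : Fin N, ((m : ℕ) + 1) * j m = n)

lemma le_of_weight {N n : ℕ} {j : Fin N → ℕ} (h : ∑ m : Fin N, ((m : ℕ) + 1) * j m = n)
    (m : Fin N) : ((m : ℕ) + 1) * j m ≤ n :=
  h ▸ Finset.single_le_sum (f := fun m : Fin N => ((m : ℕ) + 1) * j m)
    (fun _ _ => Nat.zero_le _) (Finset.mem_univ m)

lemma mem_partVec {N n : ℕ} {j : Fin N → ℕ} :
    j ∈ partVec N n ↔ ∑ m : Fin N, ((m : ℕ) + 1) * j m = n := by
  unfold partVec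
  simp only [Finset.mem_filter, Fintype.mem_piFinset, Finset.mem_range, and_iff_right_iff_imp]
  intro h m
  have := le_of_weight h m
  nlinarith

/-- The summand `∏ y_m ^ j_m / j_m!` of the exponential formula. -/
noncomputable def partWeight {N : ℕ} (y : ℕ → ℝ) (j : Fin N → ℕ) : ℝ :=
  ∏ m : Fin N, y m ^ j m / ((j m).factorial : ℝ)

/-- The coefficient of `t ^ n` in `exp (∑ m < N, y m * t ^ (m + 1))`. -/
noncomputable def bellCoeff (N : ℕ) (y : ℕ → ℝ) (n : ℕ) : ℝ :=
  ∑ j ∈ partVec N n, partWeight y j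

lemma bellCoeff_zero (N : ℕ) (y : ℕ → ℝ) : bellCoeff N y 0 = 1 := by
  have : partVec N 0 = {0} := by
    ext j
    simp [mem_partVec, funext_iff]
  simp [bellCoeff, this, partWeight]

/-- Adding one part of size `m + 1`. -/
lemma partWeight_add_single {N : ℕ} (y : ℕ → ℝ) (j : Fin N → ℕ) (m : Fin N) :
    ((j + Pi.single m 1 : Fin N → ℕ) m : ℝ) * partWeight y (j + Pi.single m 1)
      = y m * partWeight y j := by
  unfold partWeight
  rw [← Finset.mul_prod_erase _ _ (Finset.mem_univ m),
    ← Finset.mul_prod_erase (a := m) _ (fun m : Fin N => y m ^ j m / ((j m).factorial : ℝ))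
      (Finset.mem_univ m)]
  have h : ∏ i ∈ Finset.univ.erase m, y i ^ ((j + Pi.single m 1 : Fin N → ℕ) i) /
        (((j + Pi.single m 1 : Fin N → ℕ) i).factorial : ℝ)
      = ∏ i ∈ Finset.univ.erase m, y i ^ j i / ((j i).factorial : ℝ) := by
    refine Finset.prod_congr rfl fun i hi => ?_
    simp [Pi.single_eq_of_ne (Finset.ne_of_mem_erase hi)]
  rw [h]
  have h1 : ((j m).factorial : ℝ) ≠ 0 := by positivity
  have h2 : (j m : ℝ) + 1 ≠ 0 := by positivity
  simp only [Pi.add_apply, Pi.single_eq_same, Nat.factorial_succ, pow_succ]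
  push_cast
  field_simp

lemma weight_add_single {N : ℕ} (j : Fin N → ℕ) (m : Fin N) :
    ∑ i : Fin N, ((i : ℕ) + 1) * (j + Pi.single m 1 : Fin N → ℕ) i
      = (∑ i : Fin N, ((i : ℕ) + 1) * j i) + (m + 1) := by
  simp [mul_add, Finset.sum_add_distrib, Pi.single_apply]

/-- For each `m`, removing a part of size `m + 1` is a bijection from the partitions of `n + 1`
having such a part to the partitions of `n - m`. -/
lemma sum_mul_partWeight {N n : ℕ} (y : ℕ → ℝ) (m : Fin N) (hm : (m : ℕ) ≤ n) :
    ∑ j ∈ partVec N (n + 1), (j m : ℝ) * partWeight y j = y m * bellCoeff N y (n - m) := by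
  rw [bellCoeff, Finset.mul_sum]
  symm
  refine Finset.sum_of_injOn (fun j => j + Pi.single m 1) ?_ ?_ ?_ ?_
  · exact fun a _ b _ h => add_right_cancel h
  · intro j hj
    simp only [Finset.mem_coe, mem_partVec] at hj ⊢
    rw [weight_add_single, hj]
    omega
  · intro j hj hj'
    suffices j m = 0 by simp [this]
    by_contra h0
    refine hj' ⟨j - Pi.single m 1, ?_, ?_⟩
    all_goals
      have he : j - Pi.single m 1 + Pi.single m 1 = j := by
        funext i
        by_cases hi : i = m
        · subst hi
          simp
          omega
        · simp [Pi.single_eq_of_ne hi]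
    · have := weight_add_single (j - Pi.single m 1) m
      rw [he, mem_partVec.1 hj] at this
      simp only [Finset.mem_coe, mem_partVec]
      omega
    · exact he
  · intro j _
    exact (partWeight_add_single y j m).symm

lemma bellCoeff_succ {N n : ℕ} (hn : n + 1 ≤ N) (y : ℕ → ℝ) :
    ((n : ℝ) + 1) * bellCoeff N y (n + 1)
      = ∑ i ∈ Finset.range (n + 1), ((i : ℝ) + 1) * y i * bellCoeff N y (n - i) := by
  have h1 : ((n : ℝ) + 1) * bellCoeff N y (n + 1)
      = ∑ m : Fin N, ((m : ℝ) + 1) * ∑ j ∈ partVec N (n + 1), (j m : ℝ) * partWeight y j := by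
    simp_rw [bellCoeff, Finset.mul_sum]
    rw [Finset.sum_comm]
    refine Finset.sum_congr rfl fun j hj => ?_
    have h := congrArg (Nat.cast (R := ℝ)) (mem_partVec.1 hj)
    push_cast at h
    rw [← h, Finset.sum_mul]
    exact Finset.sum_congr rfl fun _ _ => by ring
  rw [h1]
  symm
  -- parts larger than `n + 1` do not occur
  have h2 : ∀ m : Fin N, ∑ j ∈ partVec N (n + 1), (j m : ℝ) * partWeight y j
      = if (m : ℕ) ≤ n then y m * bellCoeff N y (n - m) else 0 := by
    intro m
    split_ifs with hm
    · exact sum_mul_partWeight y m hm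
    · refine Finset.sum_eq_zero fun j hj => ?_
      have := le_of_weight (mem_partVec.1 hj) m
      have h0 : j m = 0 := by
        by_contra h0
        have := Nat.le_mul_of_pos_right ((m : ℕ) + 1) (Nat.pos_of_ne_zero h0)
        omega
      simp [h0]
  simp_rw [h2]
  rw [Fin.sum_univ_eq_sum_range
    (fun m => ((m : ℝ) + 1) * if m ≤ n then y m * bellCoeff N y (n - m) else 0) N]
  rw [← Finset.sum_subset (Finset.range_subset_range.2 hn)]
  · refine Finset.sum_congr rfl fun i hi => ?_
    rw [if_pos (by simpa [Nat.lt_succ_iff] using hi), mul_assoc]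
  · intro i _ hi
    rw [if_neg (by simpa [Nat.lt_succ_iff] using hi), mul_zero]

/-- Extension by zero matches the multiplicity vectors of `B_{n,k}`, which see only the parts of size
at most `n - k + 1`, with the vectors in `partVec N n` having `k` parts. -/
lemma bellPartial_eq {N n k : ℕ} (hk : 1 ≤ k) (hkn : k ≤ n) (hn : n ≤ N) (x : ℕ → ℝ) :
    bellPartial n k x = n.factorial *
      ∑ j ∈ (partVec N n).filter (fun j => ∑ m, j m = k),
        partWeight (fun m => x (m + 1) / ((m + 1).factorial : ℝ)) j := by
  have ha : n - k + 1 ≤ N := by omega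
  have hinj : Function.Injective (Fin.castLE ha) := Fin.castLE_injective ha
  have hext : ∀ (j : Fin (n - k + 1) → Fin (n + 1)) (m),
      Function.extend (Fin.castLE ha) (fun m => (j m : ℕ)) 0 (Fin.castLE ha m) = j m :=
    fun j m => hinj.extend_apply _ _ _
  have hext' : ∀ (j : Fin (n - k + 1) → Fin (n + 1)) (m), m ∉ Set.range (Fin.castLE ha) →
      Function.extend (Fin.castLE ha) (fun m => (j m : ℕ)) 0 m = 0 :=
    fun j m hm => Function.extend_apply' _ _ _ hm
  have hs : ∀ j : Fin (n - k + 1) → Fin (n + 1),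
      ∑ m, (j m : ℕ) = ∑ m, Function.extend (Fin.castLE ha) (fun m => (j m : ℕ)) 0 m :=
    fun j => Fintype.sum_of_injective _ hinj _ _ (fun m hm => hext' j m hm)
      (fun m => (hext j m).symm)
  have hw : ∀ j : Fin (n - k + 1) → Fin (n + 1),
      ∑ m : Fin (n - k + 1), ((m : ℕ) + 1) * (j m : ℕ) = ∑ m : Fin N, ((m : ℕ) + 1) *
        Function.extend (Fin.castLE ha) (fun m => (j m : ℕ)) 0 m :=
    fun j => Fintype.sum_of_injective _ hinj _ _ (fun m hm => by rw [hext' j m hm, mul_zero])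
      (fun m => by rw [hext j m, Fin.val_castLE])
  rw [bellPartial, Finset.mul_sum]
  refine Finset.sum_nbij (fun j => Function.extend (Fin.castLE ha) (fun m => (j m : ℕ)) 0)
    ?_ ?_ ?_ ?_
  · intro j hj
    simpa [mem_partVec, ← hs, ← hw, and_comm] using hj
  · intro a _ b _ h
    funext m
    have := congrFun h (Fin.castLE ha m)
    simp only [hext] at this
    exact Fin.ext this
  · intro J hJ
    simp only [Finset.coe_filter, Set.mem_ofPred_eq, mem_partVec] at hJ
    obtain ⟨hJn, hJk⟩ := hJ
    -- a part larger than `n - k + 1` leaves too little weight for the remaining `k - 1` parts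
    have hsupp : ∀ m, m ∉ Set.range (Fin.castLE ha) → J m = 0 := by
      intro m hm
      by_contra h0
      have hm' : n - k + 1 ≤ (m : ℕ) := by
        by_contra hlt
        exact hm ⟨⟨m, by omega⟩, rfl⟩
      have h1 : ∑ i : Fin N, (i : ℕ) * J i + k = n := by
        rw [← hJn, ← hJk, ← Finset.sum_add_distrib]
        exact Finset.sum_congr rfl fun _ _ => by ring
      have h2 : (m : ℕ) * J m ≤ ∑ i : Fin N, (i : ℕ) * J i :=
        Finset.single_le_sum (f := fun i : Fin N => (i : ℕ) * J i)
          (fun _ _ => Nat.zero_le _) (Finset.mem_univ m)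
      have h3 : (m : ℕ) ≤ (m : ℕ) * J m := Nat.le_mul_of_pos_right _ (Nat.pos_of_ne_zero h0)
      omega
    have hlt : ∀ m, J m < n + 1 := fun m => by
      have := le_of_weight hJn m
      nlinarith
    have hE : Function.extend (Fin.castLE ha) (fun m => J (Fin.castLE ha m)) 0 = J := by
      funext m
      by_cases hm : m ∈ Set.range (Fin.castLE ha)
      · obtain ⟨i, rfl⟩ := hm
        exact hinj.extend_apply _ _ _
      · rw [Function.extend_apply' _ _ _ hm, hsupp m hm, Pi.zero_apply]
    refine ⟨fun m => ⟨J (Fin.castLE ha m), hlt _⟩, ?_, hE⟩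
    simp only [Finset.coe_filter, Set.mem_ofPred_eq, Finset.mem_univ, true_and]
    have e1 := hs fun m => ⟨J (Fin.castLE ha m), hlt _⟩
    have e2 := hw fun m => ⟨J (Fin.castLE ha m), hlt _⟩
    simp only [hE] at e1 e2
    exact ⟨e1.trans hJk, e2.trans hJn⟩
  · intro j _
    rw [partWeight, ← Fintype.prod_of_injective _ hinj
      (fun m => (x ((m : ℕ) + 1) / (((m : ℕ) + 1).factorial : ℝ)) ^ (j m : ℕ)
        / ((j m : ℕ).factorial : ℝ)) _ (fun m hm => by rw [hext' j m hm]; simp)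
      (fun m => by rw [hext j m, Fin.val_castLE]), Finset.prod_div_distrib]
    ring

/-- With at least `n` variables, `B_n` is `n!` times the exponential-formula coefficient. -/
lemma bellComplete_eq {N n : ℕ} (hn : n ≤ N) (x : ℕ → ℝ) :
    bellComplete n x
      = n.factorial * bellCoeff N (fun m => x (m + 1) / ((m + 1).factorial : ℝ)) n := by
  rcases Nat.eq_zero_or_pos n with rfl | hpos
  · simp [bellComplete, bellCoeff_zero]
  rw [bellComplete, if_neg hpos.ne', bellCoeff,
    ← Finset.sum_fiberwise_of_maps_to (s := partVec N n) (t := Finset.Icc 1 n) (g := fun j => ∑ m, j m),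
    Finset.mul_sum]
  · refine Finset.sum_congr rfl fun k hk => ?_
    rw [Finset.mem_Icc] at hk
    exact bellPartial_eq hk.1 hk.2 hn x
  · intro j hj
    have hj := mem_partVec.1 hj
    rw [Finset.mem_Icc]
    constructor
    · by_contra h
      have h0 : ∑ m, j m = 0 := by omega
      have h1 : ∀ m, j m = 0 := by simpa using h0
      simp [h1] at hj
      omega
    · rw [← hj]
      exact Finset.sum_le_sum fun m _ => Nat.le_mul_of_pos_left _ (Nat.succ_pos _)

/-- The classical recurrence for complete Bell polynomials. -/
lemma bellComplete_succ (n : ℕ) (x : ℕ → ℝ) :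
    bellComplete (n + 1) x
      = ∑ i ∈ Finset.range (n + 1), (n.choose i : ℝ) * x (i + 1) * bellComplete (n - i) x := by
  rw [bellComplete_eq le_rfl, Nat.factorial_succ]
  push_cast
  rw [mul_comm ((n : ℝ) + 1), mul_assoc, bellCoeff_succ le_rfl, Finset.mul_sum]
  refine Finset.sum_congr rfl fun i hi => ?_
  have hi : i ≤ n := by simpa [Nat.lt_succ_iff] using hi
  rw [bellComplete_eq (N := n + 1) (by omega), ← Nat.choose_mul_factorial_mul_factorial hi,
    Nat.factorial_succ]
  push_cast
  have h1 : (i.factorial : ℝ) ≠ 0 := by positivity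
  have h2 : (i : ℝ) + 1 ≠ 0 := by positivity
  field_simp

lemma Omega_iterate_succ (f : ℝ → ℝ) (hf : ContDiff ℝ (⊤ : ℕ∞) f) (n : ℕ) (x : ℝ) :
    (Omega f)^[n + 1] (fun _ => (1 : ℝ)) x
      = ∑ i ∈ Finset.range (n + 1), (n.choose i : ℝ) * (-(iteratedDeriv i f x))
          * (Omega f)^[n - i] (fun _ => (1 : ℝ)) x := by
  set F : ℝ → ℝ := fun x => ∫ t in (0 : ℝ)..x, f t with hF
  have hFd : ∀ x, HasDerivAt F (f x) x := fun x =>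
    (hf.continuous).integral_hasStrictDerivAt 0 x |>.hasDerivAt
  have hFs : ContDiff ℝ (⊤ : ℕ∞) F := by
    rw [contDiff_infty_iff_deriv]
    refine ⟨fun x => (hFd x).differentiableAt, ?_⟩
    rwa [show deriv F = f from funext fun x => (hFd x).deriv]
  set g : ℝ → ℝ := fun x => Real.exp (-F x) with hg
  have hgs : ContDiff ℝ (⊤ : ℕ∞) g := hFs.neg.exp
  have hgd : deriv g = fun x => (-f x) * g x := by
    funext x
    have h : HasDerivAt g (Real.exp (-F x) * (-f x)) x := (hFd x).neg.exp
    rw [h.deriv, mul_comm]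
  -- `Ω_f` is conjugate to `d/dx` through multiplication by `e^F`
  have key : ∀ n, (Omega f)^[n] (fun _ => (1 : ℝ))
      = fun x => Real.exp (F x) * iteratedDeriv n g x := by
    intro n
    induction n with
    | zero =>
      funext x
      simp [hg, ← Real.exp_add]
    | succ n ih =>
      rw [Function.iterate_succ_apply', ih]
      funext x
      have hd : DifferentiableAt ℝ (iteratedDeriv n g) x :=
        (hgs.differentiable_iteratedDeriv n (by exact_mod_cast ENat.natCast_lt_top n)) x
      have h : HasDerivAt (fun x => Real.exp (F x) * iteratedDeriv n g x) _ x :=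
        (hFd x).exp.mul hd.hasDerivAt
      rw [Omega, h.deriv, iteratedDeriv_succ]
      ring
  have hL := iteratedDeriv_fun_mul (n := n) (x := x) (f := fun x => -f x) (g := g)
    ((hf.neg.of_le (by exact_mod_cast le_top)).contDiffAt)
    ((hgs.of_le (by exact_mod_cast le_top)).contDiffAt)
  simp only [key]
  rw [iteratedDeriv_succ', hgd, hL, Finset.mul_sum]
  refine Finset.sum_congr rfl fun i _ => ?_
  rw [iteratedDeriv_fun_neg]
  ring

/-- `B_n(-f(x), -f'(x), …, -f^{(n-1)}(x)) = (Ω_f^{[n]} 𝟏)(x)`, where `𝟏` is the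
constant function `1`. -/
theorem bellComplete_neg_derivs_eq_omega_iterate
    (f : ℝ → ℝ) (hf : ContDiff ℝ (⊤ : ℕ∞) f) (n : ℕ) (x : ℝ) :
    bellComplete n (fun m => -(iteratedDeriv (m - 1) f x))
      = (Omega f)^[n] (fun _ => (1 : ℝ)) x := by
  induction n using Nat.strong_induction_on with
  | _ n ih =>
    cases n with
    | zero => simp [bellComplete]
    | succ n =>
      rw [bellComplete_succ, Omega_iterate_succ f hf]
      refine Finset.sum_congr rfl fun i _ => ?_
      rw [ih (n - i) (by omega), Nat.add_sub_cancel]
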